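/- Let χ = (P,Q,R) be a Kolmogorov vector field with deg P, deg Q, deg R ≤ 3. Then χ is a vector field on 𝕋² if and only if there exist c₁, c₂ ∈ ℝ such that P = (1/4)c₂z²x + c₁xy², Q = (1/4)c₂z²y − c₁x²y, and R = (c₂/2)z(−a²(x²+y²)+z²+a⁴−1). Moreover, in this case χ(F) = c₂z²·F, i.e., K = c₂z² is the cofactor of χ for 𝕋². -/

import Mathlib

open MvPolynomial

/-- Derivative of `g` along the polynomial vector field `(P, Q, R)` in `ℝ[x,y,z]`. -/
noncomputable def vf (P Q R g : MvPolynomial (Fin 3) ℝ) : MvPolynomial (Fin 3) ℝ :=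
  P * pderiv 0 g + Q * pderiv 1 g + R * pderiv 2 g

/-- The defining polynomial `F = (x²+y²-a²)² + z² - 1` of the torus `𝕋²`. -/
noncomputable def torusF (a : ℝ) : MvPolynomial (Fin 3) ℝ :=
  (X 0 ^ 2 + X 1 ^ 2 - C (a ^ 2)) ^ 2 + X 2 ^ 2 - 1

/-- `(P, Q, R)` is a polynomial vector field on the torus `𝕋²`. -/
def IsVFOnTorus (a : ℝ) (P Q R : MvPolynomial (Fin 3) ℝ) : Prop :=
  ∃ K : MvPolynomial (Fin 3) ℝ, vf P Q R (torusF a) = K * torusF a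

/-!
Write `S = x² + y² - a²`, so that `F = S² + z² - 1`, and `P = x p`, `Q = y q`, `R = z r`. Then
`χ(F) = K F` reads `4 S (x² p + y² q) + 2 z² r = K F`. At `z = 0` it becomes
`4 S (x² p + y² q) = K (S² - 1)`; as `S` is coprime to `S² - 1` and `deg K ≤ 2`, `K` is a constant
multiple of `S`, and the origin, where `S² = a⁴ ≠ 1`, shows that this constant is zero. So `z ∣ K`
and, modulo `z`, `(p, q)` is a multiple of the syzygy `(y², -x²)`. Dividing by `z` and repeating the
argument, where by degree only the zero multiple of the syzygy is left, gives `p = c₁ y² + α z²`,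
`q = -c₁ x² + β z²` and `K = c₂ z²`. After cancelling `z²`, the terms of degree four force
`α = β = c₂ / 4`, and the equation determines `r`.
-/

section CommSemiring

variable {σ τ R : Type*} [CommSemiring R]

lemma totalDegree_aeval_le {f : σ → MvPolynomial τ R} (hf : ∀ i, (f i).totalDegree ≤ 1)
    (p : MvPolynomial σ R) : (aeval f p).totalDegree ≤ p.totalDegree := by
  rw [aeval_def, eval₂_eq]
  refine totalDegree_finsetSum_le fun d hd => ?_
  calc (C (p.coeff d) * ∏ i ∈ d.support, f i ^ d i).totalDegree
      ≤ (∏ i ∈ d.support, f i ^ d i).totalDegree := by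
        simpa only [totalDegree_C, zero_add] using totalDegree_mul (C (p.coeff d)) _
    _ ≤ ∑ i ∈ d.support, (f i ^ d i).totalDegree := totalDegree_finsetProd _ _
    _ ≤ ∑ i ∈ d.support, d i := Finset.sum_le_sum fun i _ =>
        (totalDegree_pow _ _).trans (mul_le_of_le_one_right' (hf i))
    _ ≤ p.totalDegree := le_totalDegree hd

/-- Restriction of a polynomial to the coordinate hyperplane `X i = 0`, kept in the same
polynomial ring. -/
noncomputable def evalZero [DecidableEq σ] (i : σ) : MvPolynomial σ R →ₐ[R] MvPolynomial σ R :=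
  aeval (Function.update X i 0)

section evalZero

variable [DecidableEq σ]

@[simp]
lemma evalZero_X_self (i : σ) : evalZero (R := R) i (X i) = 0 := by
  simp [evalZero]

@[simp]
lemma evalZero_X_of_ne {i j : σ} (h : j ≠ i) : evalZero (R := R) i (X j) = X j := by
  simp [evalZero, h]

lemma totalDegree_evalZero_le (i : σ) (p : MvPolynomial σ R) :
    (evalZero i p).totalDegree ≤ p.totalDegree := by
  refine totalDegree_aeval_le (fun j => ?_) p
  by_cases hj : j = i
  · simp [hj]
  · simpa [hj, X] using totalDegree_monomial_le (Finsupp.single j 1) (1 : R)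

end evalZero

lemma coeffs_eq_zero_of_totalDegree_le_one {i j : σ} (hij : i ≠ j) {u v w : R}
    (h : (C u * X i ^ 2 + C v * X j ^ 2 + C w).totalDegree ≤ 1) : u = 0 ∧ v = 0 := by
  classical
  have hcoeff (k : σ) : coeff (Finsupp.single k 2) (C u * X i ^ 2 + C v * X j ^ 2 + C w) = 0 :=
    coeff_eq_zero_of_totalDegree_lt (by simpa using Nat.lt_of_le_of_lt h one_lt_two)
  have hconst (k : σ) : 0 ≠ Finsupp.single k 2 := (Finsupp.single_ne_zero.mpr two_ne_zero).symm
  constructor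
  · simpa [coeff_X_pow, Finsupp.single_eq_single_iff, coeff_C, hconst, hij, hij.symm] using hcoeff i
  · simpa [coeff_X_pow, Finsupp.single_eq_single_iff, coeff_C, hconst, hij, hij.symm] using hcoeff j

end CommSemiring

section CommRing

variable {σ R : Type*} [CommRing R]

lemma X_dvd_sub_evalZero [DecidableEq σ] (i : σ) (p : MvPolynomial σ R) :
    X i ∣ p - evalZero i p := by
  induction p using MvPolynomial.induction_on with
  | C c => simp [← algebraMap_eq]
  | add p q hp hq => simpa only [map_add, add_sub_add_comm] using dvd_add hp hq
  | mul_X p j hp =>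
    rw [map_mul]
    by_cases hj : j = i
    · simp [hj]
    · rw [evalZero_X_of_ne hj, ← sub_mul]
      exact hp.mul_right _

lemma X_dvd_iff_evalZero_eq_zero [DecidableEq σ] {i : σ} {p : MvPolynomial σ R} :
    X i ∣ p ↔ evalZero i p = 0 := by
  constructor
  · rintro ⟨q, rfl⟩
    simp
  · intro h
    simpa only [h, sub_zero] using X_dvd_sub_evalZero i p

section IsDomain

variable [IsDomain R]

lemma totalDegree_le_of_totalDegree_mul_le {p q : MvPolynomial σ R} {n : ℕ} (hp : p ≠ 0)
    (h : (p * q).totalDegree ≤ p.totalDegree + n) : q.totalDegree ≤ n := by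
  rcases eq_or_ne q 0 with rfl | hq
  · simp
  · rwa [totalDegree_mul_of_isDomain hp hq, add_le_add_iff_left] at h

lemma totalDegree_le_of_totalDegree_X_mul_le {i : σ} {p : MvPolynomial σ R} {n : ℕ}
    (h : (X i * p).totalDegree ≤ n + 1) : p.totalDegree ≤ n :=
  totalDegree_le_of_totalDegree_mul_le (X_ne_zero i) (by rwa [totalDegree_X, add_comm])

lemma exists_eq_C_of_totalDegree_X_mul_le_one {i : σ} {p : MvPolynomial σ R}
    (h : (X i * p).totalDegree ≤ 1) : ∃ c, p = C c :=
  ⟨_, totalDegree_eq_zero_iff_eq_C.mp <| Nat.le_zero.mp <|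
    totalDegree_le_of_totalDegree_X_mul_le h⟩

lemma totalDegree_le_of_C_mul_X_pow_add_X_mul {i j : σ} {c : R} {n : ℕ} {p : MvPolynomial σ R}
    (h : (C c * X i ^ (n + 1) + X j * p).totalDegree ≤ n + 1) : p.totalDegree ≤ n := by
  have hc : (C c * X i ^ (n + 1)).totalDegree ≤ n + 1 := by
    simpa using totalDegree_mul (C c) (X i ^ (n + 1))
  refine totalDegree_le_of_totalDegree_X_mul_le (i := j) ?_
  simpa using (totalDegree_sub _ _).trans (max_le h hc)

lemma exists_eq_X_pow_mul_of_X_pow_mul_add_eq_zero {i j : σ} (hij : i ≠ j) (n : ℕ)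
    {p q : MvPolynomial σ R} (h : X i ^ n * p + X j ^ n * q = 0) :
    ∃ m, p = X j ^ n * m ∧ q = -(X i ^ n * m) := by
  have hndvd : ¬(X j : MvPolynomial σ R) ∣ X i ^ n := fun hdvd =>
    hij (X_dvd_X.mp (X_prime.dvd_of_dvd_pow hdvd)).symm
  obtain ⟨m, rfl⟩ : X j ^ n ∣ p :=
    X_prime.pow_dvd_of_dvd_mul_left n hndvd ⟨-q, by linear_combination h⟩
  refine ⟨m, rfl, mul_left_cancel₀ (pow_ne_zero n (X_ne_zero j)) ?_⟩
  linear_combination h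

lemma eq_zero_of_mul_eq_mul_sq_sub_one {s n k : MvPolynomial σ R} (hs : s ≠ 0)
    (hs₀ : constantCoeff s ^ 2 ≠ 1) (hn₀ : constantCoeff n = 0)
    (hk : k.totalDegree ≤ s.totalDegree) (h : s * n = k * (s ^ 2 - 1)) : k = 0 ∧ n = 0 := by
  obtain ⟨l, rfl⟩ : s ∣ k := ⟨k * s - n, by linear_combination h⟩
  obtain ⟨c, rfl⟩ : ∃ c, l = C c := ⟨_, totalDegree_eq_zero_iff_eq_C.mp <|
    Nat.le_zero.mp <| totalDegree_le_of_totalDegree_mul_le hs hk⟩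
  have hn : n = C c * (s ^ 2 - 1) := mul_left_cancel₀ hs (by linear_combination h)
  have hc : c = 0 := by
    simpa [hn, sub_eq_zero, hs₀] using hn₀
  simp [hn, hc]

end IsDomain

end CommRing

section Torus

variable {a : ℝ} {p q r w K P Q R : MvPolynomial (Fin 3) ℝ}

/-- The polynomial `S = x² + y² - a²` of the cylinder through the core circle of the torus,
for which `F = S² + z² - 1`. -/
noncomputable def cylinder (a : ℝ) : MvPolynomial (Fin 3) ℝ :=
  X 0 ^ 2 + X 1 ^ 2 - C (a ^ 2)

lemma torusF_eq_cylinder_sq_add (a : ℝ) : torusF a = cylinder a ^ 2 + (X 2 ^ 2 - 1) :=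
  add_sub_assoc _ _ _

lemma vf_torusF (a : ℝ) (P Q R : MvPolynomial (Fin 3) ℝ) :
    vf P Q R (torusF a) = cylinder a * (C 4 * (X 0 * P + X 1 * Q)) + X 2 * (C 2 * R) := by
  have h2 : (C 2 : MvPolynomial (Fin 3) ℝ) = 2 := map_ofNat C 2
  have h4 : (C 4 : MvPolynomial (Fin 3) ℝ) = 4 := map_ofNat C 4
  simp only [vf, torusF, cylinder, h2, h4, map_sub, map_add, Derivation.leibniz_pow,
    Nat.add_one_sub_one, pow_one, pderiv_X, Pi.single_eq_same, smul_eq_mul, mul_one, nsmul_eq_mul,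
    Nat.cast_ofNat, ne_eq, one_ne_zero, not_false_eq_true, Pi.single_eq_of_ne, mul_zero,
    add_zero, derivation_C, sub_zero, Fin.isValue, Fin.reduceEq, Derivation.map_one_eq_zero,
    zero_ne_one, zero_add, sub_self]
  ring

lemma totalDegree_cylinder (a : ℝ) : (cylinder a).totalDegree = 2 := by
  apply le_antisymm
  · exact (totalDegree_sub_C_le _ _).trans ((totalDegree_add _ _).trans (by simp))
  · by_contra! hlt
    have hS : cylinder a = C 1 * X 0 ^ 2 + C 1 * X 1 ^ 2 + C (-(a ^ 2)) := by
      simp only [cylinder, C_1, C_neg]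
      ring
    rw [hS] at hlt
    exact one_ne_zero (coeffs_eq_zero_of_totalDegree_le_one (by decide) (Nat.le_of_lt_succ hlt)).1

lemma cylinder_ne_zero (a : ℝ) : cylinder a ≠ 0 := fun h => by
  simpa [h] using totalDegree_cylinder a

lemma totalDegree_torusF (a : ℝ) : (torusF a).totalDegree = 4 := by
  have hsq : (cylinder a ^ 2).totalDegree = 4 := by
    rw [sq, totalDegree_mul_of_isDomain (cylinder_ne_zero a) (cylinder_ne_zero a),
      totalDegree_cylinder]
  have hz : (X 2 ^ 2 - 1 : MvPolynomial (Fin 3) ℝ).totalDegree ≤ 2 :=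
    (totalDegree_sub _ _).trans (by simp)
  rw [torusF_eq_cylinder_sq_add, totalDegree_add_eq_left_of_totalDegree_lt (by omega), hsq]

lemma torusF_ne_zero (a : ℝ) : torusF a ≠ 0 := fun h => by
  simpa [h] using totalDegree_torusF a

lemma totalDegree_cofactor_le {n : ℕ} (hP : P.totalDegree ≤ n + 1) (hQ : Q.totalDegree ≤ n + 1)
    (hR : R.totalDegree ≤ n + 3) (h : vf P Q R (torusF a) = K * torusF a) :
    K.totalDegree ≤ n := by
  refine totalDegree_le_of_totalDegree_mul_le (torusF_ne_zero a) ?_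
  have hS := totalDegree_cylinder a
  have hXP := totalDegree_mul (X 0) P
  have hXQ := totalDegree_mul (X 1) Q
  have hN := totalDegree_add (X 0 * P) (X 1 * Q)
  have h4N := totalDegree_mul (C 4) (X 0 * P + X 1 * Q)
  have hSN := totalDegree_mul (cylinder a) (C 4 * (X 0 * P + X 1 * Q))
  have h2R := totalDegree_mul (C 2) R
  have hXR := totalDegree_mul (X 2) (C 2 * R)
  simp only [totalDegree_X, totalDegree_C] at hXP hXQ h4N h2R hXR
  rw [mul_comm, ← h, vf_torusF, totalDegree_torusF]
  refine (totalDegree_add _ _).trans (max_le (hSN.trans ?_) (hXR.trans ?_)) <;> omega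

lemma evalZero_torusF (a : ℝ) : evalZero 2 (torusF a) = cylinder a ^ 2 - 1 := by
  simp [torusF, cylinder, ← algebraMap_eq]

lemma evalZero_cylinder (a : ℝ) : evalZero 2 (cylinder a) = cylinder a := by
  simp [cylinder, ← algebraMap_eq]

lemma X_dvd_cofactor_and_exists_evalZero_eq (ha : a ^ 4 ≠ 1) (hK : K.totalDegree ≤ 2)
    (h : cylinder a * (C 4 * (X 0 ^ 2 * p + X 1 ^ 2 * q)) + X 2 * w = K * torusF a) :
    X 2 ∣ K ∧ ∃ m, evalZero 2 p = X 1 ^ 2 * m ∧ evalZero 2 q = -(X 0 ^ 2 * m) := by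
  have h₀ : cylinder a * (C 4 * (X 0 ^ 2 * evalZero 2 p + X 1 ^ 2 * evalZero 2 q)) =
      evalZero 2 K * (cylinder a ^ 2 - 1) := by
    simpa [evalZero_cylinder, evalZero_torusF, ← algebraMap_eq] using congrArg (evalZero 2) h
  obtain ⟨hK₀, hN⟩ := eq_zero_of_mul_eq_mul_sq_sub_one (cylinder_ne_zero a)
    (by simpa [cylinder, ← pow_mul] using ha) (by simp)
    ((totalDegree_evalZero_le 2 K).trans (hK.trans_eq (totalDegree_cylinder a).symm)) h₀
  exact ⟨X_dvd_iff_evalZero_eq_zero.mpr hK₀, exists_eq_X_pow_mul_of_X_pow_mul_add_eq_zero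
    (by decide) 2 ((mul_eq_zero.mp hN).resolve_left (C_ne_zero.mpr four_ne_zero))⟩

lemma exists_eq_add_X_mul (ha : a ^ 4 ≠ 1) (hp : p.totalDegree ≤ 2) (hK : K.totalDegree ≤ 2)
    (h : cylinder a * (C 4 * (X 0 ^ 2 * p + X 1 ^ 2 * q)) + X 2 * w = K * torusF a) :
    ∃ c p' q', p = C c * X 1 ^ 2 + X 2 * p' ∧ q = -(C c * X 0 ^ 2) + X 2 * q' := by
  obtain ⟨-, m, hpm, hqm⟩ := X_dvd_cofactor_and_exists_evalZero_eq ha hK h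
  have hm : m.totalDegree ≤ 0 := by
    refine totalDegree_le_of_totalDegree_mul_le (pow_ne_zero 2 (X_ne_zero 1)) ?_
    rw [← hpm, totalDegree_X_pow]
    exact (totalDegree_evalZero_le 2 p).trans hp
  obtain ⟨p', hp'⟩ := X_dvd_sub_evalZero 2 p
  obtain ⟨q', hq'⟩ := X_dvd_sub_evalZero 2 q
  rw [totalDegree_eq_zero_iff_eq_C.mp (Nat.le_zero.mp hm)] at hpm hqm
  exact ⟨_, p', q', by linear_combination hp' + hpm, by linear_combination hq' + hqm⟩

lemma X_dvd_of_totalDegree_le_one (ha : a ^ 4 ≠ 1) (hp : p.totalDegree ≤ 1)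
    (hK : K.totalDegree ≤ 2)
    (h : cylinder a * (C 4 * (X 0 ^ 2 * p + X 1 ^ 2 * q)) + X 2 * w = K * torusF a) :
    X 2 ∣ p ∧ X 2 ∣ q := by
  obtain ⟨-, m, hpm, hqm⟩ := X_dvd_cofactor_and_exists_evalZero_eq ha hK h
  have hm : m = 0 := by
    by_contra hm
    have hdeg := totalDegree_evalZero_le 2 p
    rw [hpm, totalDegree_mul_of_isDomain (pow_ne_zero 2 (X_ne_zero 1)) hm,
      totalDegree_X_pow] at hdeg
    omega
  simp only [X_dvd_iff_evalZero_eq_zero, hpm, hqm, hm, mul_zero, neg_zero, and_self]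

lemma eq_of_cylinder_mul_add_eq {α β k : ℝ} (hr : r.totalDegree ≤ 3)
    (h : cylinder a * (C 4 * (X 0 ^ 2 * C α + X 1 ^ 2 * C β)) + C 2 * r = C k * torusF a) :
    α = k / 4 ∧ β = k / 4 ∧
      r = C (k / 2) * (-C (a ^ 2) * (X 0 ^ 2 + X 1 ^ 2) + X 2 ^ 2 + C (a ^ 4 - 1)) := by
  set d : MvPolynomial (Fin 3) ℝ :=
    C (4 * α - k) * X 0 ^ 2 + C (4 * β - k) * X 1 ^ 2 + C (k * a ^ 2) with hd
  have hSd : cylinder a * d = C k * (X 2 ^ 2 - 1) - C 2 * r := by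
    rw [torusF_eq_cylinder_sq_add] at h
    simp only [hd, cylinder, map_sub, map_mul] at h ⊢
    linear_combination h
  have hdeg : d.totalDegree ≤ 1 := by
    refine totalDegree_le_of_totalDegree_mul_le (cylinder_ne_zero a) ?_
    have hz := totalDegree_sub (X 2 ^ 2) (1 : MvPolynomial (Fin 3) ℝ)
    have hkz := totalDegree_mul (C k) (X 2 ^ 2 - 1 : MvPolynomial (Fin 3) ℝ)
    have h2r := totalDegree_mul (C 2) r
    simp only [totalDegree_C, totalDegree_X_pow, totalDegree_one] at hz hkz h2r
    rw [hSd, totalDegree_cylinder]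
    exact (totalDegree_sub _ _).trans (by omega)
  obtain ⟨hα, hβ⟩ := coeffs_eq_zero_of_totalDegree_le_one (by decide) hdeg
  obtain rfl : α = k / 4 := by linarith
  obtain rfl : β = k / 4 := by linarith
  refine ⟨rfl, rfl, MvPolynomial.funext fun v => ?_⟩
  have hv := congrArg (eval v) h
  simp only [torusF, cylinder, map_add, map_mul, map_sub, map_neg, map_pow, map_one, eval_C,
    eval_X] at hv ⊢
  linear_combination hv / 2

lemma exists_coeffs_of_cylinder_mul_add_eq (ha : a ^ 4 ≠ 1) (hp : p.totalDegree ≤ 2)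
    (hq : q.totalDegree ≤ 2) (hr : r.totalDegree ≤ 3) (hK : K.totalDegree ≤ 2)
    (h : cylinder a * (C 4 * (X 0 ^ 2 * p + X 1 ^ 2 * q)) + X 2 * (C 2 * (X 2 * r)) =
      K * torusF a) :
    ∃ c₁ c₂, p = C c₁ * X 1 ^ 2 + C (c₂ / 4) * X 2 ^ 2 ∧
      q = -(C c₁ * X 0 ^ 2) + C (c₂ / 4) * X 2 ^ 2 ∧
      r = C (c₂ / 2) * (-C (a ^ 2) * (X 0 ^ 2 + X 1 ^ 2) + X 2 ^ 2 + C (a ^ 4 - 1)) := by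
  obtain ⟨K', rfl⟩ := (X_dvd_cofactor_and_exists_evalZero_eq ha hK h).1
  obtain ⟨c, p', q', rfl, rfl⟩ := exists_eq_add_X_mul ha hp hK h
  have h' : cylinder a * (C 4 * (X 0 ^ 2 * p' + X 1 ^ 2 * q')) + X 2 * (C 2 * r) =
      K' * torusF a := mul_left_cancel₀ (X_ne_zero 2) (by linear_combination h)
  have hp' : p'.totalDegree ≤ 1 := totalDegree_le_of_C_mul_X_pow_add_X_mul hp
  have hq' : q'.totalDegree ≤ 1 := by
    rw [← neg_mul, ← C_neg] at hq
    exact totalDegree_le_of_C_mul_X_pow_add_X_mul hq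
  have hK' : K'.totalDegree ≤ 1 := totalDegree_le_of_totalDegree_X_mul_le hK
  obtain ⟨k, rfl⟩ := (X_dvd_cofactor_and_exists_evalZero_eq ha (hK'.trans one_le_two) h').1
  obtain ⟨⟨α, rfl⟩, β, rfl⟩ := X_dvd_of_totalDegree_le_one ha hp' (hK'.trans one_le_two) h'
  obtain ⟨α, rfl⟩ := exists_eq_C_of_totalDegree_X_mul_le_one hp'
  obtain ⟨β, rfl⟩ := exists_eq_C_of_totalDegree_X_mul_le_one hq'
  obtain ⟨k, rfl⟩ := exists_eq_C_of_totalDegree_X_mul_le_one hK'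
  have h'' : cylinder a * (C 4 * (X 0 ^ 2 * C α + X 1 ^ 2 * C β)) + C 2 * r = C k * torusF a :=
    mul_left_cancel₀ (X_ne_zero 2) (by linear_combination h')
  obtain ⟨rfl, rfl, hr_eq⟩ := eq_of_cylinder_mul_add_eq hr h''
  exact ⟨c, k, by ring, by ring, hr_eq⟩

lemma vf_torusF_of_eq {c₁ c₂ : ℝ}
    (hP : P = C (1 / 4 : ℝ) * C c₂ * X 2 ^ 2 * X 0 + C c₁ * X 0 * X 1 ^ 2)
    (hQ : Q = C (1 / 4 : ℝ) * C c₂ * X 2 ^ 2 * X 1 - C c₁ * X 0 ^ 2 * X 1)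
    (hR : R = C (c₂ / 2) * X 2 *
      (-C (a ^ 2) * (X 0 ^ 2 + X 1 ^ 2) + X 2 ^ 2 + C (a ^ 4 - 1))) :
    vf P Q R (torusF a) = (C c₂ * X 2 ^ 2) * torusF a := by
  rw [vf_torusF, hP, hQ, hR]
  refine MvPolynomial.funext fun v => ?_
  simp only [torusF, cylinder, map_add, map_mul, map_sub, map_neg, map_pow, map_one, eval_C, eval_X]
  ring

end Torus

theorem stmt_9_general (a : ℝ) (ha : a ^ 4 ≠ 1) (P Q R : MvPolynomial (Fin 3) ℝ)
    (hP : P.totalDegree ≤ 3) (hQ : Q.totalDegree ≤ 3) (hR : R.totalDegree ≤ 4)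
    (hx : X 0 ∣ P) (hy : X 1 ∣ Q) (hz : X 2 ∣ R) :
    (IsVFOnTorus a P Q R ↔
      ∃ c₁ c₂ : ℝ,
        P = C (1/4 : ℝ) * C c₂ * X 2 ^ 2 * X 0 + C c₁ * X 0 * X 1 ^ 2 ∧
        Q = C (1/4 : ℝ) * C c₂ * X 2 ^ 2 * X 1 - C c₁ * X 0 ^ 2 * X 1 ∧
        R = C (c₂ / 2) * X 2 *
          (- C (a ^ 2) * (X 0 ^ 2 + X 1 ^ 2) + X 2 ^ 2 + C (a ^ 4 - 1))) ∧
    (∀ c₁ c₂ : ℝ,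
        P = C (1/4 : ℝ) * C c₂ * X 2 ^ 2 * X 0 + C c₁ * X 0 * X 1 ^ 2 →
        Q = C (1/4 : ℝ) * C c₂ * X 2 ^ 2 * X 1 - C c₁ * X 0 ^ 2 * X 1 →
        R = C (c₂ / 2) * X 2 *
          (- C (a ^ 2) * (X 0 ^ 2 + X 1 ^ 2) + X 2 ^ 2 + C (a ^ 4 - 1)) →
        vf P Q R (torusF a) = (C c₂ * X 2 ^ 2) * torusF a) := by
  refine ⟨⟨?_, fun ⟨_, _, hP', hQ', hR'⟩ => ⟨_, vf_torusF_of_eq hP' hQ' hR'⟩⟩,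
    fun _ _ => vf_torusF_of_eq⟩
  rintro ⟨K, hK⟩
  have hKdeg : K.totalDegree ≤ 2 := totalDegree_cofactor_le hP hQ (hR.trans (by norm_num)) hK
  obtain ⟨p, rfl⟩ := hx
  obtain ⟨q, rfl⟩ := hy
  obtain ⟨r, rfl⟩ := hz
  rw [vf_torusF] at hK
  obtain ⟨c₁, c₂, rfl, rfl, rfl⟩ := exists_coeffs_of_cylinder_mul_add_eq ha
    (totalDegree_le_of_totalDegree_X_mul_le hP) (totalDegree_le_of_totalDegree_X_mul_le hQ)
    (totalDegree_le_of_totalDegree_X_mul_le hR) hKdeg (by linear_combination hK)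
  have hc : (C (c₂ / 4) : MvPolynomial (Fin 3) ℝ) = C (1 / 4) * C c₂ := by
    rw [← C_mul, one_div_mul_eq_div]
  exact ⟨c₁, c₂, by rw [hc]; ring, by rw [hc]; ring, by ring⟩

theorem stmt_9 (a : ℝ) (ha : 1 < a) (P Q R : MvPolynomial (Fin 3) ℝ)
    (hP : P.totalDegree ≤ 3) (hQ : Q.totalDegree ≤ 3) (hR : R.totalDegree ≤ 3)
    (hx : X 0 ∣ P) (hy : X 1 ∣ Q) (hz : X 2 ∣ R) :
    (IsVFOnTorus a P Q R ↔
      ∃ c₁ c₂ : ℝ,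
        P = C (1/4 : ℝ) * C c₂ * X 2 ^ 2 * X 0 + C c₁ * X 0 * X 1 ^ 2 ∧
        Q = C (1/4 : ℝ) * C c₂ * X 2 ^ 2 * X 1 - C c₁ * X 0 ^ 2 * X 1 ∧
        R = C (c₂ / 2) * X 2 *
          (- C (a ^ 2) * (X 0 ^ 2 + X 1 ^ 2) + X 2 ^ 2 + C (a ^ 4 - 1))) ∧
    (∀ c₁ c₂ : ℝ,
        P = C (1/4 : ℝ) * C c₂ * X 2 ^ 2 * X 0 + C c₁ * X 0 * X 1 ^ 2 →
        Q = C (1/4 : ℝ) * C c₂ * X 2 ^ 2 * X 1 - C c₁ * X 0 ^ 2 * X 1 →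
        R = C (c₂ / 2) * X 2 *
          (- C (a ^ 2) * (X 0 ^ 2 + X 1 ^ 2) + X 2 ^ 2 + C (a ^ 4 - 1)) →
        vf P Q R (torusF a) = (C c₂ * X 2 ^ 2) * torusF a) :=
  stmt_9_general a (one_lt_pow₀ ha four_ne_zero).ne' P Q R hP hQ (hR.trans (by norm_num)) hx hy hz
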